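/- Let N be a natural number with N ≥ 3, let p, q be real numbers with 1 < p < N−1 and q > p−1, and set β = p/(q+1−p). Define λ(β) = β(p−1)+p−N, A = −(N−1)/(q+1) − β(pβ+p−N), B = (N−1−p)/p + β(pβ+p−N), and C = β²((N−1)/p − (pβ+p−N)·λ(β)). If A ≥ 0, B ≥ 0 and C ≥ 0, then β = (N−1−p)/p (equivalently q = q_c := (N−1)p/(N−1−p) − 1), and in that case A = B = C = 0. -/

import Mathlib

/-- If the Pohozaev coefficients A, B, C are all nonnegative for
β = p/(q+1-p), then β equals the critical value (N-1-p)/p (equivalently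
q = q_c = (N-1)p/(N-1-p) - 1), and A = B = C = 0. -/
theorem stmt0 (N : ℕ) (hN : 3 ≤ N) (p q : ℝ) (hp : 1 < p) (hpN : p < (N : ℝ) - 1)
    (hq : p - 1 < q) (β lam A B C : ℝ)
    (hβ : β = p / (q + 1 - p))
    (hlam : lam = β * (p - 1) + p - N)
    (hA : A = -(((N : ℝ) - 1) / (q + 1)) - β * (p * β + p - N))
    (hB : B = ((N : ℝ) - 1 - p) / p + β * (p * β + p - N))
    (hC : C = β ^ 2 * (((N : ℝ) - 1) / p - (p * β + p - N) * lam))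
    (hA0 : 0 ≤ A) (hB0 : 0 ≤ B) (hC0 : 0 ≤ C) :
    β = ((N : ℝ) - 1 - p) / p ∧ q = ((N : ℝ) - 1) * p / ((N : ℝ) - 1 - p) - 1 ∧
      A = 0 ∧ B = 0 ∧ C = 0 := by
  have hp0 : 0 < p := by linarith
  have hr : 0 < q + 1 - p := by linarith
  have hb : 0 < β := by rw [hβ]; positivity
  have hq1 : q + 1 = p * (β + 1) / β := by
    rw [hβ]; field_simp; ring
  obtain ⟨s, hs⟩ : ∃ s : ℝ, s = (N : ℝ) - 1 - p * (β + 1) := ⟨_, rfl⟩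
  have hn : (N : ℝ) = s + p * (β + 1) + 1 := by linarith
  have ht : 0 < p * (β + 1) := by positivity
  have hA' : A * (p * (β + 1)) = β * s * (p * (β + 1) - 1) := by
    rw [hA, hq1, hn]; field_simp; ring
  have hC' : C = β ^ 2 * (s * (1 / p - s - 2 - β)) := by
    rw [hC, hlam, hn]; field_simp; ring
  have hs0 : 0 ≤ s := by
    by_contra h
    push Not at h
    have h1 : 0 < β * (-s) * (p * (β + 1) - 1) := by
      have : 0 < p * (β + 1) - 1 := by nlinarith
      have : 0 < -s := by linarith
      positivity
    have h2 : 0 ≤ A * (p * (β + 1)) := by positivity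
    linarith
  have hs1 : s = 0 := by
    by_contra h
    have hs2 : 0 < s := lt_of_le_of_ne hs0 (Ne.symm h)
    have h1 : 1 / p < 1 := by rw [div_lt_one hp0]; exact hp
    have h3 : 0 < s + 2 + β - 1 / p := by linarith
    have h2 : 0 < β ^ 2 * (s * (s + 2 + β - 1 / p)) := by positivity
    linarith
  subst hs1
  have hbn : (N : ℝ) - 1 - p = p * β := by rw [hn]; ring
  refine ⟨?_, ?_, ?_, ?_, ?_⟩
  · rw [hbn]; field_simp
  · have h1 : q = p * (β + 1) / β - 1 := by linarith
    rw [hbn, hn, h1]; field_simp; ring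
  · have h1 : A * (p * (β + 1)) = 0 := by rw [hA']; ring
    exact (mul_eq_zero.mp h1).resolve_right ht.ne'
  · rw [hB, hbn, hn]; field_simp; ring
  · rw [hC']; ring
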